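/- There exists a DFAwtl M whose accepted language L(M) is regular but whose jump complexity satisfies JC_M(n) ∈ Θ(n). Concretely, the DFAwtl over V={a,b,c} with states {q₀,q₁,q₂}, initial state q₀, final states {q₂}, and transitions δ(q₀,b)=q₀, δ(q₀,c)=q₁, δ(q₁,a)=q₂ (all other transitions undefined) accepts a regular language, and for every n≥0 the word a·bⁿ·c is accepted with jc_M(a·bⁿ·c)=n+1 jumps, so JC_M is not constant-bounded. -/

import Mathlib

/-- A deterministic finite automaton with translucent letters (DFAwtl):
`delta` is a partial transition function, `start` the initial state,
`accept` the set of final states. -/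
structure DFAwtl (Q V : Type*) where
  delta : Q → V → Option Q
  start : Q
  accept : Set Q

namespace DFAwtl

variable {Q V : Type*}

/-- Sequential step: `(s, a·y) → (p, y)` when `δ(s,a) = p`. -/
def SeqStep (M : DFAwtl Q V) (c c' : Q × List V) : Prop :=
  ∃ a : V, c.2 = a :: c'.2 ∧ M.delta c.1 a = some c'.1

/-- Jumping step: `(s, x·a·y) ↻ (p, x·y)` when `x ≠ ε`, `δ(s,a) = p`, and
`δ(s,b)` is undefined for every letter `b` occurring in `x`. -/
def JumpStep (M : DFAwtl Q V) (c c' : Q × List V) : Prop :=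
  ∃ (x y : List V) (a : V), x ≠ [] ∧ c.2 = x ++ a :: y ∧ c'.2 = x ++ y ∧
    M.delta c.1 a = some c'.1 ∧ ∀ b ∈ x, M.delta c.1 b = none

/-- Either a sequential or a jumping step. -/
def Step (M : DFAwtl Q V) (c c' : Q × List V) : Prop :=
  M.SeqStep c c' ∨ M.JumpStep c c'

/-- Reflexive–transitive closure of sequential steps (the relation `→*`). -/
def SeqSteps (M : DFAwtl Q V) : Q × List V → Q × List V → Prop :=
  Relation.ReflTransGen M.SeqStep

/-- Reflexive–transitive closure of all steps (the relation `⊨*`). -/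
def Steps (M : DFAwtl Q V) : Q × List V → Q × List V → Prop :=
  Relation.ReflTransGen M.Step

/-- `StepsN M c c' k` : configuration `c'` is reachable from `c` by a computation
containing exactly `k` jumping steps. -/
inductive StepsN (M : DFAwtl Q V) : Q × List V → Q × List V → ℕ → Prop
  | refl (c : Q × List V) : StepsN M c c 0
  | seq {c c' c'' : Q × List V} {n : ℕ} :
      M.SeqStep c c' → StepsN M c' c'' n → StepsN M c c'' n
  | jump {c c' c'' : Q × List V} {n : ℕ} :
      M.JumpStep c c' → StepsN M c' c'' n → StepsN M c c'' (n + 1)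

/-- The language accepted by `M`. -/
def lang (M : DFAwtl Q V) : Set (List V) :=
  {w | ∃ f ∈ M.accept, M.Steps (M.start, w) (f, [])}

/-- `M` accepts `w` by a computation with exactly `k` jumping steps. -/
def AcceptsIn (M : DFAwtl Q V) (w : List V) (k : ℕ) : Prop :=
  ∃ f ∈ M.accept, M.StepsN (M.start, w) (f, []) k

/-- The jump complexity of a word: the (for a deterministic machine, unique)
number of jumping steps in an accepting computation on `w`. -/
noncomputable def jc (M : DFAwtl Q V) (w : List V) : ℕ :=
  sInf {k | M.AcceptsIn w k}

/-- The jump complexity function: the maximal number of jumps over accepted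
words of length `n`. -/
noncomputable def JC (M : DFAwtl Q V) (n : ℕ) : ℕ :=
  sSup {k | ∃ w ∈ M.lang, w.length = n ∧ M.jc w = k}

/-- `JC_M` is bounded by a constant. -/
def ConstBounded (M : DFAwtl Q V) : Prop :=
  ∃ c : ℕ, ∀ w ∈ M.lang, M.jc w ≤ c

/-- Extended (sequential) transition function on words. -/
def deltaStar (M : DFAwtl Q V) (q : Q) (w : List V) : Option Q :=
  w.foldl (fun o a => o.bind fun p => M.delta p a) (some q)

/-- A state `q` is `a`-deficient if `δ(q,a)` is undefined. -/
def Deficient (M : DFAwtl Q V) (q : Q) (a : V) : Prop :=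
  M.delta q a = none

/-- The set `⟨q,a⟩` (empty when `δ(q,a)` is defined). -/
def angleSet (M : DFAwtl Q V) (q : Q) (a : V) : Set Q :=
  {s | M.delta q a = none ∧ ∃ x : List V, x ≠ [] ∧
    M.SeqSteps (q, x) (s, []) ∧ M.Steps (s, a :: x) (q, [])}

/-- The set `[q,a]` (empty when `δ(q,a)` is defined). -/
def bracketSet (M : DFAwtl Q V) (q : Q) (a : V) : Set Q :=
  {s | M.delta q a = none ∧ ∃ x : List V, x ≠ [] ∧
    M.SeqSteps (q, x) (s, []) ∧ M.SeqSteps (s, a :: x) (q, [])}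

/-- Every state of the automaton is useful. -/
def AllUseful (M : DFAwtl Q V) : Prop :=
  ∀ q : Q, (∃ x : List V, M.SeqSteps (M.start, x) (q, [])) ∧
    (∃ (y : List V) (f : Q), f ∈ M.accept ∧ M.SeqSteps ((q : Q), y) (f, []))

/-- `δ(q,x')` is `a`-deficient for every prefix `x'` of `x`. -/
def PrefixDeficient (M : DFAwtl Q V) (q : Q) (a : V) (x : List V) : Prop :=
  ∀ x' : List V, ∀ p : Q, x' <+: x → M.deltaStar q x' = some p → M.delta p a = none

/-- `δ(q,y')` is `a`-deficient for every proper prefix `y'` of `y`. -/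
def ProperPrefixDeficient (M : DFAwtl Q V) (q : Q) (a : V) (y : List V) : Prop :=
  ∀ y' : List V, ∀ p : Q, y' <+: y → y' ≠ y → M.deltaStar q y' = some p → M.delta p a = none

/-- The condition of Claim 2: a pair `(q,a)` with `δ(q,a)` undefined, a nonempty
cycle in `q` visiting only `a`-deficient states, and an accepting path from `q`
reading a word `y` without `a` through `a`-deficient states and then an `a`. -/
def ClaimTwoCondition (M : DFAwtl Q V) (q : Q) (a : V) : Prop :=
  M.delta q a = none ∧
  (∃ x : List V, x ≠ [] ∧ M.SeqSteps (q, x) (q, []) ∧ M.PrefixDeficient q a x) ∧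
  (∃ (y z : List V) (f : Q), a ∉ y ∧ f ∈ M.accept ∧
    M.SeqSteps (q, y ++ a :: z) (f, []) ∧ M.ProperPrefixDeficient q a y)

end DFAwtl

namespace DFAwtl

variable {Q V : Type*}

/-- `p 0, p 1, …, p n = p 0` is a circuit in the transition graph of `M`,
with the `i`-th edge labelled by the letter `a i`. -/
def IsCircuit (M : DFAwtl Q V) (n : ℕ) (p : ℕ → Q) (a : ℕ → V) : Prop :=
  0 < n ∧ p n = p 0 ∧ ∀ i < n, M.delta (p i) (a i) = some (p (i + 1))

/-- The circuit is `x`-jumping: every state of the circuit from which an `x` is read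
is `b`-deficient for some letter `b`, and at least one edge is labelled by a letter
other than `x`. -/
def IsXJumpingCircuit (M : DFAwtl Q V) (n : ℕ) (p : ℕ → Q) (a : ℕ → V) (x : V) : Prop :=
  M.IsCircuit n p a ∧ (∀ i < n, a i = x → ∃ b : V, M.delta (p i) b = none) ∧
    ∃ i < n, a i ≠ x

/-- The state `q` is reachable from the initial state. -/
def ReachableState (M : DFAwtl Q V) (q : Q) : Prop :=
  ∃ u : List V, M.Steps (M.start, u) (q, [])

end DFAwtl
-- end preamble

/-- The DFAwtl over `{a,b,c}` (with `a = 0`, `b = 1`, `c = 2`) with states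
`q₀ = 0`, `q₁ = 1`, `q₂ = 2`, initial state `q₀`, final state `q₂`, and transitions
`δ(q₀,b) = q₀`, `δ(q₀,c) = q₁`, `δ(q₁,a) = q₂` (all other transitions undefined). -/
def exampleM : DFAwtl (Fin 3) (Fin 3) :=
  { delta := ![![none, some 0, some 1], ![some 2, none, none], ![none, none, none]]
    start := 0
    accept := {2} }

/-! Two ideas. First, `M` is deterministic: the letter read from a configuration `(q, w)` is the
first letter of `w` on which `q` is defined, so any accepting computation exhibits the jump
complexity. On `a bⁿ c` the automaton has to jump over the leading `a` until it has read `c`, which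
makes `n + 1` jumps. Second, a pending translucent prefix acts as part of the state. The residuals
of the language are given by the pairs `(q₀, ε)`, `(q₀, a)`, `(q₁, ε)`, `(q₂, ε)` and by the empty
language, because a computation reads at most one `a` and never reads `b` or `c` after leaving `q₀`;
so the language is regular by Myhill–Nerode. -/

theorem isRegular_of_leftQuotient_singleton_mem {α : Type*} {S : Set (Language α)}
    (hfin : S.Finite) (hS : ∀ L ∈ S, ∀ a, L.leftQuotient [a] ∈ S) {L : Language α} (hL : L ∈ S) :
    L.IsRegular := by
  refine .of_finite_range_leftQuotient (hfin.subset ?_)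
  rintro _ ⟨x, rfl⟩
  induction x using List.reverseRecOn with
  | nil => exact hL
  | append_singleton x a ih => rw [Language.leftQuotient_append]; exact hS _ ih a

namespace DFAwtl

variable {Q V : Type*} {M : DFAwtl Q V} {q p : Q} {a b : V} {u v w : List V} {k l : ℕ}
  {c c' d d' : Q × List V}

/-- A step of `M` that reads the letter following the translucent prefix `x`. Sequential steps are
those with `x = []`, jumping steps those with `x ≠ []`; this treats both kinds uniformly. -/
def StepPast (M : DFAwtl Q V) (x : List V) (c c' : Q × List V) : Prop :=
  ∃ (y : List V) (a : V), c.2 = x ++ a :: y ∧ c'.2 = x ++ y ∧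
    M.delta c.1 a = some c'.1 ∧ ∀ b ∈ x, M.delta c.1 b = none

theorem seqStep_iff_stepPast_nil : M.SeqStep c c' ↔ M.StepPast [] c c' := by
  simp [SeqStep, StepPast]

theorem jumpStep_iff_exists_stepPast : M.JumpStep c c' ↔ ∃ x ≠ [], M.StepPast x c c' := by
  simp [JumpStep, StepPast]

theorem step_iff_exists_stepPast : M.Step c c' ↔ ∃ x, M.StepPast x c c' := by
  rw [Step, seqStep_iff_stepPast_nil, jumpStep_iff_exists_stepPast]
  grind

theorem StepPast.of_delta (ha : M.delta q a = some p) (hu : ∀ b ∈ u, M.delta q b = none) :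
    M.StepPast u (q, u ++ a :: v) (p, u ++ v) :=
  ⟨v, a, rfl, rfl, ha, hu⟩

theorem JumpStep.of_delta_singleton (ha : M.delta q a = some p) (hb : M.delta q b = none) :
    M.JumpStep (q, b :: a :: w) (p, b :: w) :=
  jumpStep_iff_exists_stepPast.mpr ⟨[b], List.cons_ne_nil b [], .of_delta ha (by simpa using hb)⟩

theorem StepPast.length_eq (h : M.StepPast u c c') : c.2.length = c'.2.length + 1 := by
  obtain ⟨y, a, hc, hc', -, -⟩ := h
  simp [hc, hc', Nat.add_assoc]

theorem StepPast.unique (h : M.StepPast u c d) (h' : M.StepPast v c d') : u = v ∧ d = d' := by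
  obtain ⟨y, a, hc, hd, ha, hu⟩ := h
  obtain ⟨y', a', hc', hd', ha', hv⟩ := h'
  -- Were one prefix longer, it would contain the letter read after the other.
  have hsplit : u = v ∧ a :: y = a' :: y' := by
    rcases List.append_eq_append_iff.mp (hc.symm.trans hc') with
      ⟨_ | ⟨e, t⟩, h₁, h₂⟩ | ⟨_ | ⟨e, t⟩, h₁, h₂⟩ <;> grind
  grind [Prod.ext_iff]

theorem Step.unique (h : M.Step c d) (h' : M.Step c d') : d = d' := by
  obtain ⟨x, hx⟩ := step_iff_exists_stepPast.mp h
  obtain ⟨x', hx'⟩ := step_iff_exists_stepPast.mp h'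
  exact (hx.unique hx').2

theorem SeqStep.not_jumpStep (h : M.SeqStep c d) : ¬ M.JumpStep c d' := by
  intro h'
  obtain ⟨x, hx, h'⟩ := jumpStep_iff_exists_stepPast.mp h'
  exact hx ((seqStep_iff_stepPast_nil.mp h).unique h').1.symm

theorem Step.length_eq (h : M.Step c c') : c.2.length = c'.2.length + 1 :=
  let ⟨_, hx⟩ := step_iff_exists_stepPast.mp h
  hx.length_eq

theorem not_step_nil : ¬ M.Step (q, []) c := fun h => by simpa using h.length_eq

theorem StepsN.steps (h : M.StepsN c c' k) : M.Steps c c' := by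
  induction h with
  | refl => exact .refl
  | seq h _ ih => exact .head (.inl h) ih
  | jump h _ ih => exact .head (.inr h) ih

theorem StepsN.le_length (h : M.StepsN c c' k) : k ≤ c.2.length := by
  induction h with
  | refl => exact Nat.zero_le _
  | seq h _ ih => have := Step.length_eq (.inl h); omega
  | jump h _ ih => have := Step.length_eq (.inr h); omega

theorem StepsN.unique (h : M.StepsN c d k) (h' : M.StepsN c d' l) (hd : ∀ e, ¬ M.Step d e)
    (hd' : ∀ e, ¬ M.Step d' e) : k = l := by
  induction h generalizing l with
  | refl =>
    cases h' with
    | refl => rfl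
    | seq s _ => exact absurd (.inl s) (hd _)
    | jump s _ => exact absurd (.inr s) (hd _)
  | seq s _ ih =>
    cases h' with
    | refl => exact absurd (.inl s) (hd' _)
    | seq s' h' => obtain rfl := Step.unique (.inl s) (.inl s'); exact ih h' hd
    | jump s' _ => exact absurd s' s.not_jumpStep
  | jump s _ ih =>
    cases h' with
    | refl => exact absurd (.inr s) (hd' _)
    | seq s' _ => exact absurd s s'.not_jumpStep
    | jump s' h' => obtain rfl := Step.unique (.inr s) (.inr s'); rw [ih h' hd]

theorem AcceptsIn.mem_lang (h : M.AcceptsIn w k) : w ∈ M.lang :=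
  let ⟨f, hf, h⟩ := h
  ⟨f, hf, h.steps⟩

theorem AcceptsIn.unique (h : M.AcceptsIn w k) (h' : M.AcceptsIn w l) : k = l := by
  obtain ⟨f, -, h⟩ := h
  obtain ⟨f', -, h'⟩ := h'
  exact h.unique h' (fun _ => not_step_nil) fun _ => not_step_nil

theorem AcceptsIn.jc_eq (h : M.AcceptsIn w k) : M.jc w = k :=
  AcceptsIn.unique (Nat.sInf_mem (s := {k | M.AcceptsIn w k}) ⟨k, h⟩) h

theorem jc_le_length (M : DFAwtl Q V) (w : List V) : M.jc w ≤ w.length := by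
  rcases Set.eq_empty_or_nonempty {k | M.AcceptsIn w k} with hempty | hne
  · simp [jc, hempty]
  · obtain ⟨f, -, h⟩ := Nat.sInf_mem hne
    exact h.le_length

theorem jc_le_JC_length (hw : w ∈ M.lang) : M.jc w ≤ M.JC w.length := by
  refine le_csSup ⟨w.length, ?_⟩ ⟨w, hw, rfl, rfl⟩
  rintro _ ⟨v, -, hv, rfl⟩
  exact hv ▸ M.jc_le_length v

/-- Acceptance from an arbitrary configuration; `M.lang` is the case `c = (M.start, w)`. -/
def Accepts (M : DFAwtl Q V) (c : Q × List V) : Prop :=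
  ∃ f ∈ M.accept, M.Steps c (f, [])

theorem Step.accepts_iff (h : M.Step c c') : M.Accepts c ↔ M.Accepts c' := by
  refine ⟨fun ⟨f, hf, hc⟩ => ⟨f, hf, ?_⟩, fun ⟨f, hf, hc'⟩ => ⟨f, hf, .head h hc'⟩⟩
  rcases hc.cases_head with rfl | ⟨d, hd, hdf⟩
  · exact absurd h not_step_nil
  · rwa [h.unique hd]

/-- The words `w` such that `M` accepts from state `q` on the tape `u ++ w`, where `u` is thought of
as a prefix already skipped. -/
def residual (M : DFAwtl Q V) (q : Q) (u : List V) : Language V :=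
  {w | M.Accepts (q, u ++ w)}

theorem mem_residual : w ∈ M.residual q u ↔ M.Accepts (q, u ++ w) := Iff.rfl

theorem leftQuotient_residual (M : DFAwtl Q V) (q : Q) (u v : List V) :
    (M.residual q u).leftQuotient v = M.residual q (u ++ v) := by
  ext w
  simp only [Language.mem_leftQuotient, mem_residual, List.append_assoc]

theorem residual_append_singleton (ha : M.delta q a = some p)
    (hu : ∀ b ∈ u, M.delta q b = none) : M.residual q (u ++ [a]) = M.residual p u := by
  ext w
  have hstep : M.Step (q, u ++ a :: w) (p, u ++ w) :=
    step_iff_exists_stepPast.mpr ⟨u, .of_delta ha hu⟩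
  simpa only [mem_residual, List.append_assoc, List.singleton_append] using hstep.accepts_iff

/-- The potential `φ` bounds how many more letters `b` can be read from each state. -/
theorem Accepts.count_le [DecidableEq V] {φ : Q → ℕ∞}
    (hφ : ∀ q a p, M.delta q a = some p → (if a = b then 1 else 0) + φ p ≤ φ q)
    (h : M.Accepts c) : (c.2.count b : ℕ∞) ≤ φ c.1 := by
  obtain ⟨f, -, h⟩ := h
  induction h using Relation.ReflTransGen.head_induction_on with
  | refl => simp
  | @head c c' hstep _ ih =>
    obtain ⟨x, y, a, hc, hc', ha, -⟩ := step_iff_exists_stepPast.mp hstep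
    calc (c.2.count b : ℕ∞)
        = (if a = b then 1 else 0) + (c'.2.count b : ℕ∞) := by
          rw [hc, hc']
          simp only [List.count_append, List.count_cons, beq_iff_eq]
          push_cast
          ring
      _ ≤ (if a = b then 1 else 0) + φ c'.1 := by gcongr
      _ ≤ φ c.1 := hφ _ _ _ ha

theorem residual_eq_zero_of_lt_count [DecidableEq V] {φ : Q → ℕ∞}
    (hφ : ∀ q a p, M.delta q a = some p → (if a = b then 1 else 0) + φ p ≤ φ q)
    (hlt : φ q < u.count b) : M.residual q u = 0 := by
  ext w
  refine iff_of_false (fun hw => hlt.not_ge ?_) (Language.notMem_zero w)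
  calc (u.count b : ℕ∞) ≤ ((u ++ w).count b : ℕ∞) := by simp
    _ ≤ φ q := Accepts.count_le hφ hw

end DFAwtl

namespace exampleM

open DFAwtl

/-- The largest number of letters `b` that a computation from state `q` can read. -/
def maxReads (b q : Fin 3) : ℕ∞ :=
  ![![1, 1, 0], ![⊤, 0, 0], ![1, 0, 0]] b q

theorem maxReads_delta (b q a p : Fin 3) (h : exampleM.delta q a = some p) :
    (if a = b then 1 else 0) + maxReads b p ≤ maxReads b q := by
  revert h
  fin_cases b <;> fin_cases q <;> fin_cases a <;> fin_cases p <;> simp [exampleM, maxReads]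

/-- The residual languages of `exampleM.lang`. -/
def residuals : Set (Language (Fin 3)) :=
  {0, exampleM.residual 0 [], exampleM.residual 0 [0], exampleM.residual 1 [],
    exampleM.residual 2 []}

theorem residual_mem_residuals_of_maxReads_lt_count {q : Fin 3} {u : List (Fin 3)} (b : Fin 3)
    (h : maxReads b q < u.count b) : exampleM.residual q u ∈ residuals :=
  .inl (residual_eq_zero_of_lt_count (maxReads_delta b) h)

theorem residual_append_singleton_mem_residuals {q p a : Fin 3} {u : List (Fin 3)}
    (ha : exampleM.delta q a = some p) (hu : ∀ b ∈ u, exampleM.delta q b = none)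
    (hp : exampleM.residual p u ∈ residuals) : exampleM.residual q (u ++ [a]) ∈ residuals := by
  rwa [residual_append_singleton ha hu]

theorem leftQuotient_singleton_mem_residuals :
    ∀ L ∈ residuals, ∀ a, L.leftQuotient [a] ∈ residuals := by
  have dead := @residual_mem_residuals_of_maxReads_lt_count
  have read := @residual_append_singleton_mem_residuals
  have mem₀ : exampleM.residual 0 [] ∈ residuals := by simp [residuals]
  have mem₀₀ : exampleM.residual 0 [0] ∈ residuals := by simp [residuals]
  have mem₁ : exampleM.residual 1 [] ∈ residuals := by simp [residuals]
  have mem₂ : exampleM.residual 2 [] ∈ residuals := by simp [residuals]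
  have mem₁₀ : exampleM.residual 1 [0] ∈ residuals := read (u := []) rfl (by simp) mem₂
  rintro _ (rfl | rfl | rfl | rfl | rfl) a
  · exact .inl rfl
  all_goals rw [leftQuotient_residual]
  · match a with
    | 0 => exact mem₀₀
    | 1 => exact read rfl (by simp) mem₀
    | 2 => exact read rfl (by simp) mem₁
  · match a with
    | 0 => exact dead 0 (by simp [maxReads])
    | 1 => exact read rfl (by simp [exampleM]) mem₀₀
    | 2 => exact read rfl (by simp [exampleM]) mem₁₀
  · match a with
    | 0 => exact read rfl (by simp) mem₂
    | 1 => exact dead 1 (by simp [maxReads])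
    | 2 => exact dead 2 (by simp [maxReads])
  · exact dead a (by fin_cases a <;> simp [maxReads])

theorem isRegular_lang : Language.IsRegular (exampleM.lang : Language (Fin 3)) :=
  isRegular_of_leftQuotient_singleton_mem (S := residuals) (by simp [residuals])
    leftQuotient_singleton_mem_residuals (.inr (.inl rfl))

theorem stepsN_word (n : ℕ) :
    exampleM.StepsN (0, 0 :: (List.replicate n 1 ++ [2])) (2, []) (n + 1) := by
  induction n with
  | zero =>
    have hlast : exampleM.SeqStep (1, [0]) (2, []) := ⟨0, rfl, rfl⟩
    exact .jump (.of_delta_singleton rfl rfl) (.seq hlast (.refl _))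
  | succ n ih => exact .jump (.of_delta_singleton rfl rfl) ih

theorem acceptsIn_word (n : ℕ) :
    exampleM.AcceptsIn (0 :: (List.replicate n 1 ++ [2])) (n + 1) :=
  ⟨2, rfl, stepsN_word n⟩

theorem succ_le_JC_add_two (n : ℕ) : n + 1 ≤ exampleM.JC (n + 2) := by
  simpa [(acceptsIn_word n).jc_eq] using jc_le_JC_length (acceptsIn_word n).mem_lang

end exampleM

/-- the automaton above accepts a regular language, yet for every `n`
the word `a·bⁿ·c` is accepted with exactly `n+1` jumps, so its jump complexity is
not constant-bounded, and indeed `JC(n) ∈ Θ(n)` (linear lower bound on the domain,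
the upper bound `JC(n) ≤ n` holding trivially). -/
theorem stmt_16 :
    Language.IsRegular (exampleM.lang : Language (Fin 3)) ∧
    (∀ n : ℕ, (0 :: (List.replicate n 1 ++ [2])) ∈ exampleM.lang ∧
      exampleM.jc (0 :: (List.replicate n 1 ++ [2])) = n + 1) ∧
    ¬ exampleM.ConstBounded ∧
    (∃ c : ℝ, 0 < c ∧ ∀ N : ℕ, ∃ n ≥ N,
      (∃ w ∈ exampleM.lang, w.length = n) ∧
        c * (n : ℝ) ≤ (exampleM.JC n : ℝ)) := by
  refine ⟨exampleM.isRegular_lang, fun n => ?_, ?_, 1 / 2, by norm_num, fun N => ?_⟩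
  · exact ⟨(exampleM.acceptsIn_word n).mem_lang, (exampleM.acceptsIn_word n).jc_eq⟩
  · rintro ⟨c, hc⟩
    have hbound := hc _ (exampleM.acceptsIn_word c).mem_lang
    rw [(exampleM.acceptsIn_word c).jc_eq] at hbound
    omega
  · refine ⟨N + 2, by omega, ⟨_, (exampleM.acceptsIn_word N).mem_lang, by simp⟩, ?_⟩
    have hJC : (N + 1 : ℝ) ≤ exampleM.JC (N + 2) := by
      exact_mod_cast exampleM.succ_le_JC_add_two N
    push_cast
    linarith [N.cast_nonneg (α := ℝ)]
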